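/- Let E be a finite-dimensional algebra over a field k of characteristic zero with Jacobson radical J. Then there exists a subalgebra T of E such that the restriction of the quotient map E → E/J to T is an isomorphism (Wedderburn–Malcev splitting). -/

import Mathlib

/-- A finite-dimensional semisimple algebra over a field of characteristic zero has a
separability idempotent, namely the Casimir element of the trace form of the regular
representation. -/
theorem exists_casimir (k A : Type*) [Field k] [CharZero k] [Ring A] [Algebra k A]
    [FiniteDimensional k A] [IsSemisimpleRing A] :
    ∃ (n : ℕ) (e f : Fin n → A) (c : A → Fin n → Fin n → k),
      (∑ i, e i * f i = 1) ∧ (∀ a i, a * e i = ∑ j, c a i j • e j) ∧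
      (∀ a j, f j * a = ∑ i, c a i j • f i) := by
  let tr : A →ₗ[k] k := LinearMap.trace k A ∘ₗ (Algebra.lmul k A).toLinearMap
  let B : LinearMap.BilinForm k A := (LinearMap.mul k A).compr₂ tr
  have hBt : ∀ x y, B x y = tr (x * y) := fun x y => rfl
  have htr : ∀ x y, tr (x * y) = tr (y * x) := by
    intro x y
    change LinearMap.trace k A (Algebra.lmul k A (x * y)) =
      LinearMap.trace k A (Algebra.lmul k A (y * x))
    rw [map_mul (Algebra.lmul k A), map_mul (Algebra.lmul k A), LinearMap.trace_mul_comm]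
  have hsym : B.IsSymm := ⟨fun x y => by simp [hBt, htr x y]⟩
  have hker : ∀ x, (∀ y, B x y = 0) → x = 0 := by
    intro x hx
    let I : Ideal A :=
      { carrier := {x | ∀ y, tr (x * y) = 0}
        add_mem' := fun {a b} ha hb y => by rw [add_mul, map_add, ha y, hb y, add_zero]
        zero_mem' := fun y => by rw [zero_mul, map_zero]
        smul_mem' := fun r a ha y => by
          rw [smul_eq_mul, mul_assoc, htr, mul_assoc]; exact ha _ }
    obtain ⟨e, he, hI⟩ := IsSemisimpleRing.ideal_eq_span_idempotent I
    have heI : e ∈ I := hI ▸ Ideal.mem_span_singleton_self e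
    have h0 : LinearMap.trace k A (Algebra.lmul k A e) = 0 := by
      have := heI 1
      rwa [mul_one] at this
    have h1 : IsIdempotentElem (Algebra.lmul k A e) := he.map (Algebra.lmul k A)
    have h2 := LinearMap.IsIdempotentElem.eq_zero_of_trace_eq_zero h1 h0
    have h3 : e = 0 := by
      have := congrArg (fun g : A →ₗ[k] A => g 1) h2
      simpa using this
    have hxI : x ∈ I := hx
    rw [hI, h3] at hxI
    simpa using hxI
  have hB : B.Nondegenerate :=
    ⟨fun x hx => hker x hx, fun y hy => hker y fun x => by rw [hsym.eq]; exact hy x⟩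
  let b := Module.finBasis k A
  let f := B.dualBasis hB b
  have hf : ∀ x i, f.repr x i = tr (x * b i) := fun x i => B.dualBasis_repr_apply hB b x i
  have hb : ∀ x i, b.repr x i = tr (x * f i) := by
    intro x i
    have := B.dualBasis_repr_apply hB f x i
    rwa [LinearMap.BilinForm.dualBasis_dualBasis hB hsym] at this
  refine ⟨_, b, f, fun a i j => tr (a * b i * f j), ?_, ?_, ?_⟩
  · rw [← sub_eq_zero]
    apply hker
    intro y
    rw [hsym.eq, hBt, mul_sub, map_sub, mul_one, sub_eq_zero]
    have : tr y = ∑ i, tr (y * b i * f i) := by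
      change LinearMap.trace k A (Algebra.lmul k A y) = _
      rw [LinearMap.trace_eq_matrix_trace k b, Matrix.trace]
      refine Finset.sum_congr rfl fun i _ => ?_
      rw [Matrix.diag_apply, LinearMap.toMatrix_apply, hb]
      rfl
    rw [this, Finset.mul_sum, map_sum]
    simp only [mul_assoc]
  · intro a i
    conv_lhs => rw [← b.sum_repr (a * b i)]
    simp only [hb]
  · intro a j
    conv_lhs => rw [← f.sum_repr (f j * a)]
    refine Finset.sum_congr rfl fun i _ => ?_
    rw [hf, mul_assoc, htr]

/-- One step of the lifting: improve a linear section that is multiplicative modulo `J ^ n`. -/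
theorem lift_step {k E A : Type*} [Field k] [Ring E] [Algebra k E] [Ring A] [Algebra k A]
    (J : Ideal E) [J.IsTwoSided] (π : E →ₐ[k] A) (hπ : ∀ x, π x = 0 ↔ x ∈ J)
    {m : ℕ} (e f : Fin m → A) (c : A → Fin m → Fin m → k)
    (h1 : ∑ i, e i * f i = 1) (he : ∀ a i, a * e i = ∑ j, c a i j • e j)
    (hf : ∀ a j, f j * a = ∑ i, c a i j • f i)
    (n : ℕ) (hn : 1 ≤ n) (s : A →ₗ[k] E) (hs : ∀ a, π (s a) = a)
    (hm : ∀ a b, s a * s b - s (a * b) ∈ J ^ n) :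
    ∃ s' : A →ₗ[k] E, (∀ a, π (s' a) = a) ∧ ∀ a b, s' a * s' b - s' (a * b) ∈ J ^ (n + 1) := by
  let F : A →ₗ[k] A →ₗ[k] E :=
    (LinearMap.mul k E).compl₁₂ s s - (LinearMap.mul k A).compr₂ s
  have hF : ∀ a b, F a b = s a * s b - s (a * b) := fun a b => rfl
  have hFm : ∀ a b, F a b ∈ J ^ n := hm
  let h : A →ₗ[k] E := ∑ i, (LinearMap.mulLeft k (s (e i))) ∘ₗ F (f i)
  have hh : ∀ a, h a = ∑ i, s (e i) * F (f i) a := by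
    intro a; simp [h, LinearMap.sum_apply]
  have hhm : ∀ a, h a ∈ J ^ n := by
    intro a; rw [hh]
    exact Ideal.sum_mem _ fun i _ => Ideal.mul_mem_left _ _ (hFm _ _)
  have hmul : ∀ x ∈ J, ∀ y ∈ J ^ n, x * y ∈ J ^ (n + 1) := by
    intro x hx y hy
    rw [Ideal.IsTwoSided.pow_succ]
    exact Ideal.mul_mem_mul hx hy
  have hle : J ^ n ≤ J := Ideal.pow_le_self (by omega)
  have hJ : ∀ a b, s a * s b - s (a * b) ∈ J := fun a b => hle (hm a b)
  refine ⟨s - h, fun a => ?_, fun a b => ?_⟩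
  · rw [LinearMap.sub_apply, map_sub, hs, (hπ _).2 (hle (hhm a)), sub_zero]
  · have cas : ∑ i, s (a * e i) * F (f i) b = ∑ i, s (e i) * F (f i * a) b := by
      simp only [he, hf, map_sum, map_smul, LinearMap.sum_apply, LinearMap.smul_apply,
        Finset.sum_mul, Finset.mul_sum, smul_mul_assoc, mul_smul_comm]
      exact Finset.sum_comm
    have coc : ∀ i, F (f i) a * s b - F (f i) (a * b) = s (f i) * F a b - F (f i * a) b := by
      intro i; simp only [hF, mul_assoc, mul_sub, sub_mul]; abel
    have one : (1 : E) - ∑ i, s (e i) * s (f i) ∈ J := by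
      rw [← hπ]; simp [hs, h1]
    have key : (s - h) a * (s - h) b - (s - h) (a * b) =
        h a * h b + (1 - ∑ i, s (e i) * s (f i)) * F a b
          - ∑ i, (s a * s (e i) - s (a * e i)) * F (f i) b := by
      have e1 : h a * s b - h (a * b) =
          (∑ i, s (e i) * s (f i)) * F a b - ∑ i, s (a * e i) * F (f i) b := by
        rw [cas, hh, hh, Finset.sum_mul, Finset.sum_mul, ← Finset.sum_sub_distrib,
          ← Finset.sum_sub_distrib]
        refine Finset.sum_congr rfl fun i _ => ?_
        rw [mul_assoc, ← mul_sub, coc, mul_sub, mul_assoc]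
      have e2 : ∑ i, (s a * s (e i) - s (a * e i)) * F (f i) b =
          s a * h b - ∑ i, s (a * e i) * F (f i) b := by
        simp only [sub_mul, Finset.sum_sub_distrib, hh, Finset.mul_sum, mul_assoc]
      have e3 : h (a * b) = h a * s b - ((∑ i, s (e i) * s (f i)) * F a b
          - ∑ i, s (a * e i) * F (f i) b) := by rw [← e1]; abel
      rw [e2]
      simp only [LinearMap.sub_apply]
      rw [e3]
      simp only [sub_mul, mul_sub, one_mul]
      rw [hF a b]
      simp only [sub_mul, mul_sub, one_mul]
      abel
    rw [key]
    refine Ideal.sub_mem _ (Ideal.add_mem _ (hmul _ (hle (hhm a)) _ (hhm b))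
      (hmul _ one _ (hFm a b))) (Ideal.sum_mem _ fun i _ => hmul _ (hJ _ _) _ (hFm _ _))



/-- Wedderburn–Malcev splitting: if `E` is a finite-dimensional algebra over a field `k`
of characteristic zero with Jacobson radical `J`, then there is a subalgebra `T ⊆ E` such
that the restriction of the quotient map `E → E/J` to `T` is an isomorphism; equivalently,
every element of `E` has a unique representative in `T` modulo `J`. -/
theorem wedderburn_malcev_splitting
    (k E : Type*) [Field k] [CharZero k] [Ring E] [Algebra k E] [FiniteDimensional k E] :
    ∃ T : Subalgebra k E, ∀ x : E, ∃! t : T, x - (t : E) ∈ (⊥ : TwoSidedIdeal E).jacobson := by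
  have : IsArtinianRing E := IsArtinianRing.of_finite k E
  let J : Ideal E := Ring.jacobson E
  have hJ : ∀ x, x ∈ (⊥ : TwoSidedIdeal E).jacobson ↔ x ∈ J := by
    intro x
    rw [← TwoSidedIdeal.mem_asIdeal, TwoSidedIdeal.asIdeal_jacobson]
    have : TwoSidedIdeal.asIdeal (⊥ : TwoSidedIdeal E) = ⊥ := by ext; simp
    rw [this, Ideal.jacobson_bot]
  obtain ⟨N, hN⟩ : IsNilpotent J := IsSemiprimaryRing.isNilpotent
  let π : E →ₐ[k] E ⧸ J := Ideal.Quotient.mkₐ k J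
  have hπ : ∀ x, π x = 0 ↔ x ∈ J := fun x => Ideal.Quotient.eq_zero_iff_mem
  have hsurj : Function.Surjective π := Ideal.Quotient.mk_surjective
  have : IsSemisimpleRing (E ⧸ J) := IsSemiprimaryRing.isSemisimpleRing
  have : FiniteDimensional k (E ⧸ J) := Module.Finite.of_surjective π.toLinearMap hsurj
  obtain ⟨m, e, f, c, h1, he, hf⟩ := exists_casimir k (E ⧸ J)
  have main : ∀ n : ℕ, ∃ s : (E ⧸ J) →ₗ[k] E, (∀ a, π (s a) = a) ∧
      ∀ a b, s a * s b - s (a * b) ∈ J ^ (n + 1) := by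
    intro n
    induction n with
    | zero =>
      obtain ⟨s, hs⟩ := π.toLinearMap.exists_rightInverse_of_surjective
        (LinearMap.range_eq_top.2 hsurj)
      have hs' : ∀ a, π (s a) = a := fun a => LinearMap.congr_fun hs a
      refine ⟨s, hs', fun a b => ?_⟩
      rw [zero_add, Submodule.pow_one, ← hπ, map_sub, map_mul, hs', hs', hs', sub_self]
    | succ n ih =>
      obtain ⟨s, hs, hm⟩ := ih
      exact lift_step J π hπ e f c h1 he hf (n + 1) (by omega) s hs hm
  obtain ⟨s, hs, hm⟩ := main N
  have hmul : ∀ a b, s (a * b) = s a * s b := by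
    intro a b
    have := hm a b
    rw [Ideal.IsTwoSided.pow_succ, hN, mul_zero] at this
    exact (sub_eq_zero.1 (by simpa using this)).symm
  have hone : s 1 = 1 := by
    have hid : IsIdempotentElem (1 - s 1) :=
      IsIdempotentElem.one_sub (by rw [IsIdempotentElem, ← hmul, mul_one])
    have hmem : 1 - s 1 ∈ J := by rw [← hπ, map_sub, map_one, hs, sub_self]
    have h2 : (1 - s 1) ^ (N + 1) ∈ J ^ (N + 1) := Ideal.pow_mem_pow hmem _
    rw [hid.pow_succ_eq, Ideal.IsTwoSided.pow_succ, hN, mul_zero] at h2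
    exact (sub_eq_zero.1 (by simpa using h2)).symm
  let S : (E ⧸ J) →ₐ[k] E := AlgHom.ofLinearMap s hone hmul
  refine ⟨S.range, fun x => ⟨⟨s (π x), ⟨π x, rfl⟩⟩, ?_, ?_⟩⟩
  · change x - s (π x) ∈ _
    rw [hJ, ← hπ, map_sub, hs, sub_self]
  · rintro ⟨_, a, rfl⟩ ht
    change x - s a ∈ _ at ht
    rw [hJ, ← hπ, map_sub, hs, sub_eq_zero] at ht
    apply Subtype.ext
    change s a = s (π x)
    rw [ht]
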